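/- arXiv:0802.1293 — 2 statements merged into one kernel-verified Lean document; each statement's English description precedes it below -/
import Mathlib

section
/- Let N ≥ 2 be an EVEN integer and let A_1, A_2, … be a quasifibonacci sequence of level N. For every positive integer m, the coefficient h_m of x^m in the formal power series ∏_{k≥1}(1 − x^{A_k}) satisfies h_m ∈ {−1, 0, 1}. Equivalently, the number of representations of m as a sum of an even number of distinct terms A_i and the number of representations of m as a sum of an odd number of distinct terms A_i differ by at most 1. -/
/-- `A` (with meaningful values at indices `≥ 1`) is a quasifibonacci sequence of level `N`:
the terms are positive, `A (k+N) = A (k+N-1) + ⋯ + A k` for all `k ≥ 1`, and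
`A k > A (k-1) + ⋯ + A 1` for all `1 ≤ k ≤ N`. -/
def QuasiFib (N : ℕ) (A : ℕ → ℕ) : Prop :=
  (∀ i, 1 ≤ i → 0 < A i) ∧
  (∀ k, 1 ≤ k → A (k + N) = ∑ i ∈ Finset.Icc k (k + N - 1), A i) ∧
  (∀ k, 1 ≤ k → k ≤ N → (∑ i ∈ Finset.Icc 1 (k - 1), A i) < A k)

/-- `SRep A n` is the set of partitions of `n` into distinct terms of `A`, encoded as the
finite sets `F` of positive indices with `∑_{i ∈ F} A i = n` (i.e. the 0-1 indicator
sequences of the paper). -/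
def SRep (A : ℕ → ℕ) (n : ℕ) : Set (Finset ℕ) :=
  {F | (∀ i ∈ F, 1 ≤ i) ∧ (∑ i ∈ F, A i) = n}

/-- the length `l(a)`: the largest index `i` with `a_i = 1` (and `0` for the empty set). -/
def len (F : Finset ℕ) : ℕ := F.sup id

/-- The directed edge relation of the digraph `G_n`: `(a,b)` is an edge iff there is a `k ≥ 1`
with `a_{k+N} = 1`, `a_k = ⋯ = a_{k+N-1} = 0`, `b_{k+N} = 0`, `b_k = ⋯ = b_{k+N-1} = 1`, and
`a_t = b_t` for all `t ∉ {k, …, k+N}`. -/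
def Edge (N : ℕ) (F G : Finset ℕ) : Prop :=
  ∃ k, 1 ≤ k ∧ (k + N) ∈ F ∧ (∀ i ∈ Finset.Ico k (k + N), i ∉ F) ∧
    (k + N) ∉ G ∧ (∀ i ∈ Finset.Ico k (k + N), i ∈ G) ∧
    (∀ t, t ∉ Finset.Icc k (k + N) → (t ∈ F ↔ t ∈ G))

/-- The partial order of the poset `P_n`: `a ≥ b` iff `b` is reachable from `a` by a
(possibly empty) directed path of edges. -/
def pge (N : ℕ) : Finset ℕ → Finset ℕ → Prop := Relation.ReflTransGen (Edge N)

/-- `A_{k,0} = A_k + Σ_{1 ≤ i < k-N-1, N∤i} A_{k-N-1-i}`. -/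
def Ak0 (N : ℕ) (A : ℕ → ℕ) (k : ℕ) : ℕ :=
  A k + ∑ i ∈ (Finset.Ico 1 (k - N - 1)).filter (fun i => ¬ N ∣ i), A (k - N - 1 - i)

/-- `A_{k,1} = A_k + Σ_{1 ≤ i < k-N, N∤i} A_{k-N-i}`. -/
def Ak1 (N : ℕ) (A : ℕ → ℕ) (k : ℕ) : ℕ :=
  A k + ∑ i ∈ (Finset.Ico 1 (k - N)).filter (fun i => ¬ N ∣ i), A (k - N - i)

/-- `A_{k,2} = A_k + Σ_{1 ≤ i < k-N+1, N∤i} A_{k-N+1-i}`. -/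
def Ak2 (N : ℕ) (A : ℕ → ℕ) (k : ℕ) : ℕ :=
  A k + ∑ i ∈ (Finset.Ico 1 (k - N + 1)).filter (fun i => ¬ N ∣ i), A (k - N + 1 - i)

/-- partial sums -/
def qS (A : ℕ → ℕ) (n : ℕ) : ℕ := ∑ i ∈ Finset.Icc 1 n, A i

/-- signed number of representations of `m` with indices in `1..n` -/
def qr (A : ℕ → ℕ) (n m : ℕ) : ℤ :=
  ∑ F ∈ (Finset.Icc 1 n).powerset, if ∑ i ∈ F, A i = m then (-1 : ℤ) ^ F.card else 0

lemma qS_zero (A : ℕ → ℕ) : qS A 0 = 0 := by simp [qS]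

lemma qS_succ (A : ℕ → ℕ) (n : ℕ) : qS A (n + 1) = qS A n + A (n + 1) := by
  unfold qS
  rw [Finset.sum_Icc_succ_top (by omega)]

lemma qS_mono (A : ℕ → ℕ) : Monotone (qS A) :=
  monotone_nat_of_le_succ (fun n => by rw [qS_succ]; omega)

lemma qr_zero_n (A : ℕ → ℕ) (m : ℕ) : |qr A 0 m| ≤ 1 := by
  simp only [qr]
  rw [show Finset.Icc 1 0 = (∅ : Finset ℕ) from rfl]
  simp only [Finset.powerset_empty, Finset.sum_singleton]
  split_ifs <;> simp

lemma qr_big (A : ℕ → ℕ) (n m : ℕ) (h : qS A n < m) : qr A n m = 0 := by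
  unfold qr
  apply Finset.sum_eq_zero
  intro F hF
  rw [if_neg]
  intro h2
  have := Finset.sum_le_sum_of_subset (f := A) (Finset.mem_powerset.mp hF)
  unfold qS at h
  omega

lemma qr_succ (A : ℕ → ℕ) (n m : ℕ) : qr A (n + 1) m = qr A n m +
    ∑ F ∈ (Finset.Icc 1 n).powerset,
      if ∑ i ∈ F, A i + A (n + 1) = m then -(-1 : ℤ) ^ F.card else 0 := by
  unfold qr
  have hn : n + 1 ∉ Finset.Icc 1 n := by simp
  have : Finset.Icc 1 (n + 1) = insert (n + 1) (Finset.Icc 1 n) := by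
    ext x; simp only [Finset.mem_insert, Finset.mem_Icc]; omega
  rw [this, Finset.sum_powerset_insert hn]
  congr 1
  apply Finset.sum_congr rfl
  intro F hF
  have hnF : n + 1 ∉ F := fun h => hn (Finset.mem_powerset.mp hF h)
  rw [Finset.sum_insert hnF, Finset.card_insert_of_notMem hnF, add_comm (A (n + 1)), pow_succ]
  simp

lemma qr_succ_lt (A : ℕ → ℕ) (n m : ℕ) (h : m < A (n + 1)) : qr A (n + 1) m = qr A n m := by
  rw [qr_succ]
  rw [Finset.sum_eq_zero, add_zero]
  intro F _
  rw [if_neg]; omega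

lemma qr_succ_add (A : ℕ → ℕ) (n m : ℕ) :
    qr A (n + 1) (m + A (n + 1)) = qr A n (m + A (n + 1)) - qr A n m := by
  rw [qr_succ, sub_eq_add_neg]
  congr 1
  unfold qr
  rw [← Finset.sum_neg_distrib]
  apply Finset.sum_congr rfl
  intro F _
  simp only [Nat.add_right_cancel_iff]
  split_ifs <;> simp

section
variable {N : ℕ} {A : ℕ → ℕ}

lemma qf_rec (hN : 2 ≤ N) (hA : QuasiFib N A) (k : ℕ) :
    A (k + 1 + N) + qS A k = qS A (k + N) := by
  rw [hA.2.1 (k + 1) (by omega)]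
  unfold qS
  rw [show k + 1 + N - 1 = k + N by omega]
  have hd : Disjoint (Finset.Icc (k + 1) (k + N)) (Finset.Icc 1 k) := by
    rw [Finset.disjoint_left]; intro x; simp only [Finset.mem_Icc]; omega
  rw [← Finset.sum_union hd]
  congr 1
  ext x; simp only [Finset.mem_union, Finset.mem_Icc]; omega

lemma qf_small (hA : QuasiFib N A) (k : ℕ) (hk : k + 1 ≤ N) : qS A k < A (k + 1) :=
  hA.2.2 (k + 1) (by omega) hk

lemma qf_L1 (hN : 2 ≤ N) (hA : QuasiFib N A) (k : ℕ) : qS A k < A (k + 2) := by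
  induction k with
  | zero => rw [qS_zero]; exact hA.1 _ (by omega)
  | succ k ih =>
    by_cases h : k + 3 ≤ N
    · have := qf_small hA (k + 2) h
      have := qS_succ A (k + 1)
      show qS A (k + 1) < A (k + 3)
      have h3 : qS A (k + 2) = qS A (k + 1) + A (k + 2) := this
      have h4 : qS A (k + 2) < A (k + 3) := by assumption
      omega
    · obtain ⟨q, hq⟩ : ∃ q, k + 2 = q + N := ⟨k + 2 - N, by omega⟩
      have h1 := qf_rec hN hA q
      rw [show q + 1 + N = k + 3 by omega, ← hq] at h1
      have h2 : qS A (k + 2) = qS A (k + 1) + A (k + 2) := qS_succ A (k + 1)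
      have h3 : qS A q ≤ qS A k := qS_mono A (by omega)
      show qS A (k + 1) < A (k + 3)
      omega

lemma qf_lt (hN : 2 ≤ N) (hA : QuasiFib N A) (k : ℕ) : A (k + 1) < A (k + 2) := by
  by_cases h : k + 2 ≤ N
  · have := qf_small hA (k + 1) h
    rw [qS_succ] at this
    show A (k + 1) < A (k + 1 + 1)
    omega
  · obtain ⟨q, hq⟩ : ∃ q, k + 1 = q + N := ⟨k + 1 - N, by omega⟩
    have h1 := qf_rec hN hA q
    rw [show q + 1 + N = k + 2 by omega, ← hq, qS_succ] at h1
    have h3 : qS A (q + 1) ≤ qS A k := qS_mono A (by omega)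
    rw [qS_succ] at h3
    have := hA.1 (q + 1) (by omega)
    omega

lemma qf_mono (hN : 2 ≤ N) (hA : QuasiFib N A) (j t : ℕ) : A (j + 1) ≤ A (j + 1 + t) := by
  induction t with
  | zero => simp
  | succ t ih =>
    have h := qf_lt hN hA (j + t)
    rw [show j + t + 1 = j + 1 + t by omega, show j + t + 2 = j + 1 + (t + 1) by omega] at h
    omega

lemma qf_id_le (hN : 2 ≤ N) (hA : QuasiFib N A) (i : ℕ) (hi : 1 ≤ i) : i ≤ A i := by
  induction i, hi using Nat.le_induction with
  | base => exact hA.1 1 le_rfl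
  | succ i hi ih =>
    obtain ⟨k, rfl⟩ : ∃ k, i = k + 1 := ⟨i - 1, by omega⟩
    have : A (k + 1) < A (k + 1 + 1) := qf_lt hN hA k
    omega

lemma qf_two (hN : 2 ≤ N) (hA : QuasiFib N A) (j : ℕ) : qS A j < 2 * A (j + 1) := by
  cases j with
  | zero => rw [qS_zero]; have := hA.1 1 le_rfl; simp only [zero_add]; omega
  | succ j =>
    rw [qS_succ]
    have h1 : qS A j < A (j + 1 + 1) := qf_L1 hN hA j
    have h2 : A (j + 1) < A (j + 1 + 1) := qf_lt hN hA j
    omega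

lemma qf_peel (hN : 2 ≤ N) (hA : QuasiFib N A) (q m t : ℕ) :
    ∀ x, x + qS A q = m + qS A (q + 1 + t) →
      qr A (q + 1 + t) x = (-1) ^ t * qr A (q + 1) (m + A (q + 1)) := by
  induction t with
  | zero =>
    intro x hx
    rw [add_zero, qS_succ] at hx
    have : x = m + A (q + 1) := by omega
    simp [this]
  | succ t ih =>
    intro x hx
    rw [← add_assoc] at hx ⊢
    rw [qS_succ] at hx
    have h1 := qf_L1 hN hA q
    have h2 : A (q + 2) ≤ A (q + 2 + t) := qf_mono hN hA (q + 1) t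
    have h3 : qS A q ≤ qS A (q + 1 + t) := qS_mono A (by omega)
    rw [show q + 2 + t = q + 1 + t + 1 by omega] at h2
    obtain ⟨y, rfl⟩ : ∃ y, x = y + A (q + 1 + t + 1) := ⟨x - A (q + 1 + t + 1), by omega⟩
    rw [qr_succ_add, qr_big A _ (y + A (q + 1 + t + 1)) (by omega), ih y (by omega), pow_succ]
    ring

lemma qf_flat (hN : 2 ≤ N) (hA : QuasiFib N A) (k m t : ℕ) (hm : m < A (k + 1)) :
    qr A (k + t) m = qr A k m := by
  induction t with
  | zero => simp
  | succ t ih =>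
    rw [← add_assoc, qr_succ_lt, ih]
    have := qf_mono hN hA k t
    rw [show k + 1 + t = k + t + 1 by omega] at this
    omega

/-- Either `B = 0`, or both values reduce to position `q + 1 = j + 1 - N`. -/
lemma qf_B (hN : 2 ≤ N) (he : Even N) (hA : QuasiFib N A) (j m : ℕ) :
    qr A j (m + A (j + 1)) = 0 ∨
    ∃ q, q + 1 ≤ j ∧ m < A (q + 2) ∧ qr A j m = qr A (q + 1) m ∧
      qr A j (m + A (j + 1)) = - qr A (q + 1) (m + A (q + 1)) := by
  by_cases h : j + 1 ≤ N
  · left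
    apply qr_big
    have := qf_small hA j h
    omega
  · obtain ⟨q, hq⟩ : ∃ q, j = q + N := ⟨j - N, by omega⟩
    obtain ⟨t, ht⟩ : ∃ t, N = t + 1 := ⟨N - 1, by omega⟩
    have hrec := qf_rec hN hA q
    rw [show q + 1 + N = j + 1 by omega, ← hq] at hrec
    by_cases hm : m < A (q + 2)
    · right
      refine ⟨q, by omega, hm, ?_, ?_⟩
      · have := qf_flat hN hA (q + 1) m t hm
        rw [← this]; congr 1; omega
      · have := qf_peel hN hA q m t (m + A (j + 1)) (by
          rw [show q + 1 + t = j by omega]; omega)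
        rw [show q + 1 + t = j by omega] at this
        have ho : Odd t := by
          rw [ht] at he
          by_contra hc
          rw [Nat.not_odd_iff_even] at hc
          exact (Nat.even_add_one.mp he) hc
        rw [this, ho.neg_one_pow]; ring
    · left
      apply qr_big
      have := qf_L1 hN hA q
      omega

lemma qf_main (hN : 2 ≤ N) (he : Even N) (hA : QuasiFib N A) (j : ℕ) :
    ∀ m, m < A (j + 1) → |qr A j m| ≤ 1 ∧
      (1 ≤ j → |qr A j (m + A j)| ≤ 1 ∧ |qr A j m + qr A j (m + A j)| ≤ 1) := by
  induction j using Nat.strong_induction_on with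
  | _ j ih =>
  cases j with
  | zero => intro m _; exact ⟨qr_zero_n A m, by omega⟩
  | succ j =>
    intro m hm
    by_cases h : m < A (j + 1)
    · rw [qr_succ_add, qr_succ_lt A j m h]
      have h0 := (ih j (by omega) m h).1
      rcases qf_B hN he hA j m with hB | ⟨q, hq, hmq, h1, h2⟩
      · rw [hB]; refine ⟨h0, fun _ => ⟨?_, ?_⟩⟩ <;> simpa using h0
      · obtain ⟨a, b⟩ := ih (q + 1) (by omega) m hmq
        obtain ⟨b, c⟩ := b (by omega)
        rw [h2, h1]
        simp only [abs_le] at *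
        refine ⟨⟨by omega, by omega⟩, fun _ => ⟨⟨by omega, by omega⟩, by omega, by omega⟩⟩
    · obtain ⟨n, rfl⟩ : ∃ n, m = n + A (j + 1) := ⟨m - A (j + 1), by omega⟩
      have htwo := qf_two hN hA j
      rw [qr_succ_add, qr_succ_add, qr_big A j (n + A (j + 1) + A (j + 1)) (by omega)]
      by_cases hn : n < A (j + 1)
      · have h0 := (ih j (by omega) n hn).1
        rcases qf_B hN he hA j n with hB | ⟨q, hq, hmq, h1, h2⟩
        · rw [hB]
          simp only [abs_le] at *
          refine ⟨⟨by omega, by omega⟩, fun _ => ⟨⟨by omega, by omega⟩, by omega, by omega⟩⟩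
        · obtain ⟨a, b⟩ := ih (q + 1) (by omega) n hmq
          obtain ⟨b, c⟩ := b (by omega)
          rw [h2, h1]
          simp only [abs_le] at *
          refine ⟨⟨by omega, by omega⟩, fun _ => ⟨⟨by omega, by omega⟩, by omega, by omega⟩⟩
      · have hS : qS A j < n := by
          by_cases hj : j + 1 ≤ N
          · have := qf_small hA j hj
            omega
          · exfalso
            obtain ⟨q, hq⟩ : ∃ q, j = q + N := ⟨j - N, by omega⟩
            have hr := qf_rec hN hA q
            have hr2 := qf_rec hN hA (q + 1)
            rw [show q + 1 + 1 + N = j + 1 + 1 by omega, show q + 1 + N = j + 1 by omega,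
              qS_succ, qS_succ] at hr2
            rw [show q + 1 + N = j + 1 by omega, ← hq] at hr
            omega
        rw [qr_big A j n hS, qr_big A j (n + A (j + 1)) (by omega)]
        simp

lemma qf_final (hN : 2 ≤ N) (hA : QuasiFib N A) (m : ℕ) :
    (({F : Finset ℕ | (∀ i ∈ F, 1 ≤ i) ∧ (∑ i ∈ F, A i) = m ∧ Even F.card}.ncard : ℤ) -
        ({F : Finset ℕ | (∀ i ∈ F, 1 ≤ i) ∧ (∑ i ∈ F, A i) = m ∧ Odd F.card}.ncard : ℤ))
      = qr A m m := by
  have key : ∀ F : Finset ℕ, (∀ i ∈ F, 1 ≤ i) → ∑ i ∈ F, A i = m → F ⊆ Finset.Icc 1 m := by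
    intro F h1 h2 i hi
    have := Finset.single_le_sum (f := A) (fun _ _ => Nat.zero_le _) hi
    have := qf_id_le hN hA i (h1 i hi)
    rw [Finset.mem_Icc]
    exact ⟨h1 i hi, by omega⟩
  have hE : ∀ P : ℕ → Prop, ∀ _ : DecidablePred P,
      {F : Finset ℕ | (∀ i ∈ F, 1 ≤ i) ∧ (∑ i ∈ F, A i) = m ∧ P F.card} =
      ((Finset.Icc 1 m).powerset.filter (fun F => ∑ i ∈ F, A i = m ∧ P F.card) :
        Finset (Finset ℕ)) := by
    intro P _
    ext F
    simp only [Set.mem_ofPred_eq, Finset.coe_filter, Finset.mem_powerset]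
    constructor
    · rintro ⟨a, b, c⟩; exact ⟨key F a b, b, c⟩
    · rintro ⟨a, b, c⟩
      exact ⟨fun i hi => (Finset.mem_Icc.mp (a hi)).1, b, c⟩
  rw [hE Even inferInstance, hE Odd inferInstance, Set.ncard_coe_finset, Set.ncard_coe_finset,
    Finset.card_filter, Finset.card_filter]
  push_cast
  rw [← Finset.sum_sub_distrib]
  unfold qr
  apply Finset.sum_congr rfl
  intro F _
  rcases Nat.even_or_odd F.card with h | h
  · have h' : ¬ Odd F.card := Nat.not_odd_iff_even.mpr h
    simp [h, h']
  · have h' : ¬ Even F.card := Nat.not_even_iff_odd.mpr h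
    simp only [h, h', h.neg_one_pow]
    split_ifs <;> simp_all

end

/-- Theorem 1.1: for a quasifibonacci sequence of even level `N`, every coefficient `h_m`
(`m ≥ 1`) of `∏_{k ≥ 1} (1 - x^{A_k})` lies in `{-1, 0, 1}`; equivalently, the number of
representations of `m` as a sum of an even number of distinct terms `A_i` and the number of
representations as a sum of an odd number of distinct terms differ by at most `1`. -/
theorem stmt_0 (N : ℕ) (hN : 2 ≤ N) (hNeven : Even N) (A : ℕ → ℕ) (hA : QuasiFib N A)
    (m : ℕ) (hm : 1 ≤ m) :
    (({F : Finset ℕ | (∀ i ∈ F, 1 ≤ i) ∧ (∑ i ∈ F, A i) = m ∧ Even F.card}.ncard : ℤ) -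
        ({F : Finset ℕ | (∀ i ∈ F, 1 ≤ i) ∧ (∑ i ∈ F, A i) = m ∧ Odd F.card}.ncard : ℤ))
      ∈ ({-1, 0, 1} : Set ℤ) := by
  rw [qf_final hN hA m]
  have h := (qf_main hN hNeven hA m m (by
    have := qf_id_le hN hA (m + 1) (by omega)
    omega)).1
  rw [abs_le] at h
  simp only [Set.mem_insert_iff, Set.mem_singleton_iff]
  omega
end

section
/- Let N ≥ 2 be an EVEN integer and let A_1, A_2, … be a quasifibonacci sequence of level N. Then for every k ≥ N+1 and every n with A_{k,0} < n ≤ A_{k,1}, one has h_n = 0, where h_n = Σ_{a∈S_n} σ(a). -/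
/-- the signed count `Σ_{a ∈ S} σ(a)` where `σ(a) = (-1)^{number of ones of a}`. -/
noncomputable def sgnSum (S : Set (Finset ℕ)) : ℤ := ∑ᶠ F ∈ S, (-1 : ℤ) ^ F.card

namespace QF

theorem step {N : ℕ} (hN : 2 ≤ N) {A : ℕ → ℕ} (hA : QuasiFib N A) (i : ℕ) (hi : 1 ≤ i) :
    A i ≤ A (i + 1) := by
  obtain ⟨-, h2, h3⟩ := hA
  rcases Nat.lt_or_ge i N with h | h
  · have := h3 (i + 1) (by omega) (by omega)
    refine le_trans ?_ this.le
    exact Finset.single_le_sum (f := A) (fun _ _ => Nat.zero_le _)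
      (by rw [Finset.mem_Icc]; omega)
  · have := h2 (i + 1 - N) (by omega)
    rw [show i + 1 - N + N = i + 1 by omega] at this
    rw [this]
    exact Finset.single_le_sum (f := A) (fun _ _ => Nat.zero_le _)
      (by rw [Finset.mem_Icc]; omega)

theorem mono {N : ℕ} (hN : 2 ≤ N) {A : ℕ → ℕ} (hA : QuasiFib N A) {i j : ℕ} (hi : 1 ≤ i)
    (hij : i ≤ j) : A i ≤ A j := by
  induction j, hij using Nat.le_induction with
  | base => exact le_rfl
  | succ j hj ih => exact ih.trans (step hN hA j (by omega))

/-- The top-heavy sum below `j`. -/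
def T (N : ℕ) (A : ℕ → ℕ) (j : ℕ) : ℕ :=
  ∑ i ∈ (Finset.Ico 1 j).filter (fun i => ¬ N ∣ i), A (j - i)

theorem T_eq (N : ℕ) (A : ℕ → ℕ) (j : ℕ) :
    T N A j = ∑ l ∈ (Finset.Ico 1 j).filter (fun l => ¬ N ∣ (j - l)), A l := by
  unfold T
  refine Finset.sum_nbij' (fun i => j - i) (fun i => j - i) ?_ ?_ ?_ ?_ ?_
  · intro i hi
    simp only [Finset.mem_filter, Finset.mem_Ico] at hi ⊢
    rw [show j - (j - i) = i by omega]
    exact ⟨by omega, hi.2⟩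
  · intro i hi
    simp only [Finset.mem_filter, Finset.mem_Ico] at hi ⊢
    exact ⟨by omega, hi.2⟩
  · intro i hi
    simp only [Finset.mem_filter, Finset.mem_Ico] at hi
    omega
  · intro i hi
    simp only [Finset.mem_filter, Finset.mem_Ico] at hi
    omega
  · intros; rfl

theorem T_rec {N : ℕ} (hN : 2 ≤ N) (A : ℕ → ℕ) (j : ℕ) :
    T N A (j + N) = T N A j + ∑ l ∈ Finset.Ico (j + 1) (j + N), A l := by
  rw [T_eq, T_eq, ← Finset.sum_union]
  · refine Finset.sum_congr ?_ (fun _ _ => rfl)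
    ext l
    simp only [Finset.mem_union, Finset.mem_filter, Finset.mem_Ico]
    rcases Nat.lt_trichotomy l j with h | h | h
    · have : N ∣ (j + N - l) ↔ N ∣ (j - l) := by
        rw [show j + N - l = (j - l) + N by omega]
        exact Nat.dvd_add_self_right
      rw [this]
      constructor
      · rintro ⟨a, b⟩; left; exact ⟨by omega, b⟩
      · rintro (⟨a, b⟩ | a)
        · exact ⟨by omega, b⟩
        · omega
    · subst h
      simp
    · constructor
      · rintro ⟨a, b⟩; right; omega
      · rintro (⟨a, b⟩ | a)
        · omega
        · refine ⟨by omega, fun hd => ?_⟩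
          have := Nat.le_of_dvd (by omega) hd
          omega
  · rw [Finset.disjoint_left]
    intro l hl hl'
    simp only [Finset.mem_filter, Finset.mem_Ico] at hl hl'
    omega

theorem h2' {N : ℕ} (hN : 2 ≤ N) {A : ℕ → ℕ} (hA : QuasiFib N A) (k : ℕ) (hk : 1 ≤ k) :
    A (k + N) = ∑ i ∈ Finset.Ico k (k + N), A i := by
  rw [hA.2.1 k hk]
  refine Finset.sum_congr ?_ (fun _ _ => rfl)
  ext; simp only [Finset.mem_Icc, Finset.mem_Ico]; omega

theorem h3' {N : ℕ} {A : ℕ → ℕ} (hA : QuasiFib N A) (k : ℕ) (hk : 1 ≤ k) (hk' : k ≤ N) :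
    ∑ i ∈ Finset.Ico 1 k, A i < A k := by
  refine lt_of_le_of_lt (le_of_eq ?_) (hA.2.2 k hk hk')
  refine Finset.sum_congr ?_ (fun _ _ => rfl)
  ext; simp only [Finset.mem_Icc, Finset.mem_Ico]; omega

theorem T_lt {N : ℕ} (hN : 2 ≤ N) {A : ℕ → ℕ} (hA : QuasiFib N A) (j : ℕ) (hj : 1 ≤ j) :
    T N A j < A j := by
  induction j using Nat.strong_induction_on with
  | _ j ih =>
    rcases Nat.lt_or_ge N j with h | h
    · obtain ⟨p, rfl⟩ : ∃ p, j = p + N := ⟨j - N, by omega⟩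
      have := ih p (by omega) (by omega)
      rw [T_rec hN, h2' hN hA p (by omega),
        Finset.sum_eq_sum_Ico_succ_bot (show p < p + N by omega)]
      omega
    · refine lt_of_le_of_lt ?_ (h3' hA j hj h)
      rw [T_eq]
      exact Finset.sum_le_sum_of_subset (Finset.filter_subset _ _)

theorem le_T {N : ℕ} (hN : 2 ≤ N) {A : ℕ → ℕ} (hA : QuasiFib N A) (j : ℕ) :
    ∑ i ∈ Finset.Ico 1 j, A i ≤ T N A (j + 1) := by
  induction j using Nat.strong_induction_on with
  | _ j ih =>
    rcases Nat.eq_zero_or_pos j with h0 | h0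
    · subst h0; simp
    rcases Nat.lt_or_ge N j with h | h
    · obtain ⟨p, rfl⟩ : ∃ p, j = p + N := ⟨j - N, by omega⟩
      have := ih p (by omega)
      rw [show p + N + 1 = p + 1 + N by omega, T_rec hN,
        show p + 1 + N = p + N + 1 by omega, Finset.sum_Ico_succ_top (by omega)]
      rw [← Finset.sum_Ico_consecutive (fun i => A i) (show 1 ≤ p by omega)
        (show p ≤ p + N by omega), Finset.sum_eq_sum_Ico_succ_bot (show p < p + N by omega),
        Finset.sum_eq_sum_Ico_succ_bot (show p + 1 < p + N by omega)]
      have e := h2' hN hA p (by omega)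
      rw [Finset.sum_eq_sum_Ico_succ_bot (show p < p + N by omega),
        Finset.sum_eq_sum_Ico_succ_bot (show p + 1 < p + N by omega)] at e
      omega
    · refine (h3' hA j h0 h).le.trans ?_
      rw [T_eq]
      refine Finset.single_le_sum (f := A) (fun _ _ => Nat.zero_le _) ?_
      simp only [Finset.mem_filter, Finset.mem_Ico]
      refine ⟨by omega, ?_⟩
      rw [show j + 1 - j = 1 by omega, Nat.dvd_one]
      omega

/-- `S_{j-1} < A_j + m` whenever `m > T_{j-1}`. -/
theorem S_lt {N : ℕ} (hN : 2 ≤ N) {A : ℕ → ℕ} (hA : QuasiFib N A) (j m : ℕ) (hj : 1 ≤ j)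
    (hm : T N A (j - 1) < m) : ∑ i ∈ Finset.Ico 1 j, A i < A j + m := by
  rcases Nat.lt_or_ge N j with h | h
  · obtain ⟨p, rfl⟩ : ∃ p, j = p + N := ⟨j - N, by omega⟩
    rw [← Finset.sum_Ico_consecutive (fun i => A i) (show 1 ≤ p by omega)
        (show p ≤ p + N by omega), ← h2' hN hA p (by omega)]
    have h1 := le_T hN hA (p + N - 2)
    rw [show p + N - 2 + 1 = p + N - 1 by omega] at h1
    have h2 : ∑ i ∈ Finset.Ico 1 p, A i ≤ ∑ i ∈ Finset.Ico 1 (p + N - 2), A i :=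
      Finset.sum_le_sum_of_subset (Finset.Ico_subset_Ico le_rfl (by omega))
    omega
  · have := h3' hA j hj h
    omega

theorem core {N : ℕ} (hN : 2 ≤ N) (hNeven : Even N) {A : ℕ → ℕ} (hA : QuasiFib N A)
    (j m : ℕ) (hj : 1 ≤ j) (h1 : m < A j)
    (h2 : ∑ i ∈ Finset.Ico 1 j, A i < A j + m) :
    sgnSum (SRep A (A (j + N) + m)) = 0 := by
  classical
  have hAk := h2' hN hA j hj
  have hAk1 := h2' hN hA (j + 1) (by omega)
  set k := j + N with hk
  -- no index above `k`
  have hle : ∀ F ∈ SRep A (A k + m), ∀ i ∈ F, i ≤ k := by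
    rintro F ⟨-, hs⟩ i hi
    by_contra hlt
    have e1 : A i ≤ A k + m := hs ▸ Finset.single_le_sum (f := A) (fun _ _ => Nat.zero_le _) hi
    have e2 : A (k + 1) ≤ A i := mono hN hA (by omega) (by omega)
    rw [show j + 1 + N = k + 1 by omega, Finset.sum_Ico_succ_top (by omega)] at hAk1
    have e3 : A (k - 1) ≤ ∑ i ∈ Finset.Ico (j + 1) k, A i :=
      Finset.single_le_sum (f := A) (fun _ _ => Nat.zero_le _)
        (by rw [Finset.mem_Ico]; omega)
    have e4 : A j ≤ A (k - 1) := mono hN hA hj (by omega)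
    omega
  -- if `k ∈ F` the block is empty
  have hin : ∀ F ∈ SRep A (A k + m), k ∈ F → ∀ i ∈ Finset.Ico j k, i ∉ F := by
    rintro F ⟨-, hs⟩ hkF i hi hiF
    rw [Finset.mem_Ico] at hi
    have e1 : A j ≤ A i := mono hN hA hj hi.1
    rw [← Finset.add_sum_erase _ _ hkF] at hs
    have e2 : A i ≤ ∑ x ∈ F.erase k, A x :=
      Finset.single_le_sum (f := A) (fun _ _ => Nat.zero_le _)
        (by rw [Finset.mem_erase]; exact ⟨by omega, hiF⟩)
    omega
  -- if `k ∉ F` the block is full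
  have hout : ∀ F ∈ SRep A (A k + m), k ∉ F → Finset.Ico j k ⊆ F := by
    intro F hF hkF i hi
    by_contra hiF
    have hi' := Finset.mem_Ico.1 hi
    have e1 : A j ≤ A i := mono hN hA hj hi'.1
    have e2 : F ⊆ (Finset.Ico 1 k).erase i := by
      intro x hx
      have := hle F hF x hx
      have := hF.1 x hx
      rw [Finset.mem_erase, Finset.mem_Ico]
      have : x ≠ k := fun h => hkF (h ▸ hx)
      exact ⟨fun h => hiF (h ▸ hx), by omega, by omega⟩
    have e3 : ∑ x ∈ F, A x ≤ ∑ x ∈ (Finset.Ico 1 k).erase i, A x :=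
      Finset.sum_le_sum_of_subset e2
    have e4 := Finset.add_sum_erase (Finset.Ico 1 k) A
      (show i ∈ Finset.Ico 1 k by rw [Finset.mem_Ico]; omega)
    rw [← Finset.sum_Ico_consecutive (fun i => A i) hj (show j ≤ k by omega), ← hAk] at e4
    have := hF.2
    omega
  have hset : SRep A (A k + m) =
      ↑((Finset.range (k + 1)).powerset.filter (fun F => F ∈ SRep A (A k + m))) := by
    ext F
    simp only [Finset.coe_filter, Finset.mem_powerset, Set.mem_ofPred_eq]
    refine ⟨fun h => ⟨fun i hi => ?_, h⟩, fun h => h.2⟩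
    have := hle F h i hi
    rw [Finset.mem_range]; omega
  unfold sgnSum
  rw [hset, finsum_mem_coe_finset]
  have hmem : ∀ F, F ∈ (Finset.range (k + 1)).powerset.filter (fun F => F ∈ SRep A (A k + m)) ↔
      F ∈ SRep A (A k + m) := fun F => by
    rw [← Finset.mem_coe, ← hset]
  have hkI : k ∉ Finset.Ico j k := by simp
  have hd : ∀ F ∈ SRep A (A k + m), k ∈ F → Disjoint (F.erase k) (Finset.Ico j k) := by
    intro F hF hkF
    rw [Finset.disjoint_right]
    intro i hi hi'
    exact hin F hF hkF i hi (Finset.mem_of_mem_erase hi')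
  have hkd : ∀ F : Finset ℕ, k ∉ F → k ∉ F \ Finset.Ico j k := by
    intro F h h'
    exact h (Finset.mem_sdiff.1 h').1
  have hcI : (Finset.Ico j k).card = N := by rw [Nat.card_Ico]; omega
  refine Finset.sum_involution
    (fun F _ => if k ∈ F then F.erase k ∪ Finset.Ico j k else insert k (F \ Finset.Ico j k))
    ?_ ?_ ?_ ?_
  · intro F hF
    rw [hmem] at hF
    by_cases hkF : k ∈ F
    · simp only [if_pos hkF]
      rw [Finset.card_union_of_disjoint (hd F hF hkF), hcI, pow_add, hNeven.neg_one_pow,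
        ← Finset.card_erase_add_one hkF, pow_succ]
      ring
    · simp only [if_neg hkF]
      rw [Finset.card_insert_of_notMem (hkd F hkF), pow_succ,
        ← Finset.card_sdiff_add_card_eq_card (hout F hF hkF), hcI, pow_add, hNeven.neg_one_pow]
      ring
  · intro F hF _
    by_cases hkF : k ∈ F
    · simp only [if_pos hkF]
      intro h
      rw [← h] at hkF
      simp at hkF
    · simp only [if_neg hkF]
      intro h
      rw [← h] at hkF
      simp at hkF
  · intro F hF
    rw [hmem] at hF ⊢
    by_cases hkF : k ∈ F
    · simp only [if_pos hkF]
      refine ⟨fun i hi => ?_, ?_⟩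
      · rw [Finset.mem_union, Finset.mem_Ico] at hi
        rcases hi with hi | hi
        · exact hF.1 i (Finset.mem_of_mem_erase hi)
        · omega
      · rw [Finset.sum_union (hd F hF hkF), ← hAk, add_comm, Finset.add_sum_erase _ _ hkF]
        exact hF.2
    · simp only [if_neg hkF]
      refine ⟨fun i hi => ?_, ?_⟩
      · rw [Finset.mem_insert, Finset.mem_sdiff] at hi
        rcases hi with hi | hi
        · omega
        · exact hF.1 i hi.1
      · rw [Finset.sum_insert (hkd F hkF), hAk, add_comm, Finset.sum_sdiff (hout F hF hkF), ← hAk]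
        exact hF.2
  · intro F hF
    rw [hmem] at hF
    by_cases hkF : k ∈ F
    · simp only [if_pos hkF]
      rw [if_neg (by simp), Finset.union_sdiff_cancel_right (hd F hF hkF),
        Finset.insert_erase hkF]
    · simp only [if_neg hkF]
      rw [if_pos (by simp), Finset.erase_insert (hkd F hkF),
        Finset.sdiff_union_of_subset (hout F hF hkF)]

end QF

/-- For a quasifibonacci sequence of EVEN level `N`, if `k ≥ N+1` and
`A_{k,0} < n ≤ A_{k,1}`, then `h_n = 0`. -/
theorem stmt_18 (N : ℕ) (hN : 2 ≤ N) (hNeven : Even N) (A : ℕ → ℕ) (hA : QuasiFib N A)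
    (k n : ℕ) (hk : N + 1 ≤ k) (h1 : Ak0 N A k < n) (h2 : n ≤ Ak1 N A k) :
    sgnSum (SRep A n) = 0 := by
  obtain ⟨j, rfl⟩ : ∃ j, k = j + N := ⟨k - N, by omega⟩
  have h1' : A (j + N) + QF.T N A (j + N - N - 1) < n := h1
  have h2' : n ≤ A (j + N) + QF.T N A (j + N - N) := h2
  rw [Nat.add_sub_cancel] at h1' h2'
  obtain ⟨m, rfl⟩ : ∃ m, n = A (j + N) + m := ⟨n - A (j + N), by omega⟩
  have hT := QF.T_lt hN hA j (by omega)
  exact QF.core hN hNeven hA j m (by omega) (by omega)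
    (QF.S_lt hN hA j m (by omega) (by omega))
end
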